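/- arXiv:2012.04705 — 6 statements merged into one kernel-verified Lean document; each statement's English description precedes it below -/
import Mathlib

section
/- Let N ≥ K ≥ 1 and L ≥ 1 be integers, let w be a positive integer with w ≤ ⌊K/L⌋, and set M = wN/K. Let B be the set of (w+1)-tuples of nonnegative integers summing to K−wL−1, for b ∈ B let b̂ denote the largest component of b, and let S = (K/w)·C(K−wL+w−1, w−1). Then in the (N,K,L)-CCDN there exist a file size F, an uncoded placement in which each cache stores at most M·F bits, and a delivery scheme whose worst-case rate is at most R_new(M) = Σ_{b∈B} min{ 2(K−wL) + w − 1 − b̂ , K } / (S·(w+1)); consequently the optimal rate R*(M) under uncoded placement satisfies R*(M) ≤ R_new(M). -/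
open Finset

/-- `<m>_n`: the unique element of `{1,…,n}` congruent to `m` modulo `n`. -/
def angMod (m : ℤ) (n : ℕ) : ℕ :=
  if m % (n : ℤ) = 0 then n else (m % (n : ℤ)).toNat

namespace CCDN

/-- Sums over `ZMod n` as sums over a range. -/
lemma sum_zmod {A : Type*} [AddCommMonoid A] (n : ℕ) [NeZero n] (f : ZMod n → A) :
    ∑ x, f x = ∑ v ∈ range n, f (v : ZMod n) := by
  symm
  refine Finset.sum_bij (fun v _ => (v : ZMod n)) (by simp) ?_ ?_ (by simp)
  · intro a ha b hb h
    have := congrArg ZMod.val h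
    rwa [ZMod.val_natCast_of_lt (mem_range.1 ha), ZMod.val_natCast_of_lt (mem_range.1 hb)] at this
  · intro b _
    exact ⟨b.val, mem_range.2 (ZMod.val_lt b), by simp⟩

/-- Move the marked starting point of a cyclic configuration to the next cache. -/
def rho (K L w : ℕ) (p : ZMod K × (ZMod w → ℕ)) : ZMod K × (ZMod w → ℕ) :=
  (p.1 + ((L + p.2 0 : ℕ) : ZMod K), fun x => p.2 (x + 1))

lemma rho_iter (K L w : ℕ) (l : ℕ) (p : ZMod K × (ZMod w → ℕ)) :
    (rho K L w)^[l] p =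
      (p.1 + ((l * L + ∑ a ∈ range l, p.2 (a : ZMod w) : ℕ) : ZMod K),
        fun x => p.2 (x + (l : ZMod w))) := by
  induction l with
  | zero => simp
  | succ l ih =>
    rw [Function.iterate_succ_apply', ih, rho]
    ext1
    · simp only [sum_range_succ]
      push_cast
      ring_nf
    · funext x
      show p.2 (x + 1 + (l : ZMod w)) = p.2 (x + ((l + 1 : ℕ) : ZMod w))
      rw [show x + 1 + (l : ZMod w) = x + ((l + 1 : ℕ) : ZMod w) by push_cast; ring]

lemma rho_iter_w (K L w n : ℕ) [NeZero w] (hKn : K = w * L + n) (p : ZMod K × (ZMod w → ℕ))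
    (hp : ∑ x, p.2 x = n) : (rho K L w)^[w] p = p := by
  rw [rho_iter, ← sum_zmod, hp, ← hKn]
  ext1 <;> simp

lemma rho_iter_mul (K L w n : ℕ) [NeZero w] (hKn : K = w * L + n) (p : ZMod K × (ZMod w → ℕ))
    (hp : ∑ x, p.2 x = n) (l : ℕ) : (rho K L w)^[l * w] p = p := by
  have : Function.IsPeriodicPt (rho K L w) w p := rho_iter_w K L w n hKn p hp
  exact (this.const_mul l)

lemma rho_sum (K L w n : ℕ) [NeZero w] (p : ZMod K × (ZMod w → ℕ))
    (hp : ∑ x, p.2 x = n) (l : ℕ) : ∑ x, ((rho K L w)^[l] p).2 x = n := by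
  rw [rho_iter, ← hp]
  exact Fintype.sum_equiv (Equiv.addRight (l : ZMod w)) _ _ (fun x => rfl)

/-- cache `x` stores the packets of index `p`. -/
def stores (K L w : ℕ) (x : ZMod K) (p : ZMod K × (ZMod w → ℕ)) : Prop :=
  ∃ l, ((rho K L w)^[l] p).1 = x

/-- user `k` can access the packets of index `p`. -/
def knows (K L w : ℕ) (k : ZMod K) (p : ZMod K × (ZMod w → ℕ)) : Prop :=
  ∃ t < L, stores K L w (k + (t : ℕ)) p

lemma knows_iter (K L w n : ℕ) [NeZero w] (hKn : K = w * L + n) (p : ZMod K × (ZMod w → ℕ))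
    (hp : ∑ x, p.2 x = n) (l : ℕ) (k : ZMod K) (h : knows K L w k p) :
    knows K L w k ((rho K L w)^[l] p) := by
  obtain ⟨t, ht, l', hl'⟩ := h
  refine ⟨t, ht, l' + l * (w - 1), ?_⟩
  rw [← Function.iterate_add_apply]
  have h1 : l' + l * (w - 1) + l = l' + l * w := by
    have : 1 ≤ w := NeZero.one_le
    obtain ⟨w', rfl⟩ := Nat.exists_eq_add_of_le this
    simp; ring
  rw [h1, Function.iterate_add_apply, rho_iter_mul K L w n hKn p hp, hl']

/-- If user `k` misses `p` then it sits in some gap. -/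
lemma gap_of_not_knows (K L w : ℕ) [NeZero K] (hL : 1 ≤ L)
    (p : ZMod K × (ZMod w → ℕ)) (k : ZMod K) (h : ¬ knows K L w k p) :
    ∃ l y : ℕ, y < ((rho K L w)^[l] p).2 0 ∧
      k = ((rho K L w)^[l] p).1 + ((1 + y : ℕ) : ZMod K) := by
  classical
  have hh : ∀ l t : ℕ, t < L → ((rho K L w)^[l] p).1 ≠ k + (t : ZMod K) := by
    intro l t ht he
    exact h ⟨t, ht, l, he⟩
  -- minimal distance
  obtain ⟨l, hl⟩ : ∃ l : ℕ, ∀ l' : ℕ, (k - ((rho K L w)^[l] p).1).val ≤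
      (k - ((rho K L w)^[l'] p).1).val := by
    have := Function.argmin_le (fun l : ℕ => (k - ((rho K L w)^[l] p).1).val)
    exact ⟨_, fun l' => this l'⟩
  set q := (rho K L w)^[l] p with hq
  set δ := (k - q.1).val with hδ
  have hk : k = q.1 + (δ : ZMod K) := by
    rw [hδ, ZMod.natCast_zmod_val]; ring
  have hδK : δ < K := ZMod.val_lt _
  have hnext : ((rho K L w)^[l + 1] p).1 = q.1 + ((L + q.2 0 : ℕ) : ZMod K) := by
    rw [Function.iterate_succ_apply', ← hq]; rfl
  have h0 : δ ≠ 0 := by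
    intro h0
    apply hh l 0 (by omega)
    rw [← hq, hk, h0]; simp
  have h1 : δ < L + q.2 0 := by
    by_contra hc
    push Not at hc
    have h2 := hl (l + 1)
    have : k - ((rho K L w)^[l + 1] p).1 = ((δ - (L + q.2 0) : ℕ) : ZMod K) := by
      rw [hnext, Nat.cast_sub hc, hk]; ring
    rw [this, ZMod.val_natCast_of_lt (by omega)] at h2
    omega
  have h2 : δ ≤ q.2 0 := by
    by_contra hc
    push Not at hc
    apply hh (l + 1) (L + q.2 0 - δ) (by omega)
    rw [hnext, Nat.cast_sub (by omega)]
    rw [hk]; ring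
  refine ⟨l, δ - 1, by rw [← hq]; omega, ?_⟩
  rw [← hq, show 1 + (δ - 1) = δ by omega]
  exact hk

/-- The packet index missed by user `j` with gap vector `b`. -/
def base (K w : ℕ) (b : ZMod (w + 1) → ℕ) (j : ZMod K) : ZMod K × (ZMod w → ℕ) :=
  (j - 1 - ((b (w : ZMod (w + 1)) : ℕ) : ZMod K),
    fun a => b (a.val : ZMod (w + 1)) + if a = 0 then b (w : ZMod (w + 1)) + 1 else 0)

lemma base_psum (K w : ℕ) [NeZero w] (b : ZMod (w + 1) → ℕ) (j : ZMod K) (l : ℕ) (hl : l ≤ w) :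
    ∑ a ∈ range l, (base K w b j).2 (a : ZMod w) =
      ∑ a ∈ range l, b (a : ZMod (w + 1)) + if l = 0 then 0 else b (w : ZMod (w + 1)) + 1 := by
  induction l with
  | zero => simp
  | succ l ih =>
    rw [sum_range_succ, sum_range_succ, ih (by omega)]
    simp only [base]
    rw [ZMod.val_natCast_of_lt (by omega)]
    by_cases h : l = 0
    · subst h; simp
    · have h1 : ((l : ℕ) : ZMod w) ≠ 0 := by
        intro h0
        have := congrArg ZMod.val h0
        rw [ZMod.val_natCast_of_lt (by omega), ZMod.val_zero] at this
        exact h this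
      simp [h, h1]; ring

lemma base_sum (K w n : ℕ) [NeZero w] (b : ZMod (w + 1) → ℕ) (j : ZMod K)
    (hb : ∑ x, b x + 1 = n) : ∑ x, (base K w b j).2 x = n := by
  rw [sum_zmod, base_psum K w b j w le_rfl, ← hb, sum_zmod, sum_range_succ]
  simp [NeZero.ne w]
  ring

lemma surj (K L w n : ℕ) [NeZero K] [NeZero w] (hL : 1 ≤ L) (hKn : K = w * L + n)
    (p : ZMod K × (ZMod w → ℕ)) (hp : ∑ x, p.2 x = n) (k : ZMod K) (h : ¬ knows K L w k p) :
    ∃ l < w, ∃ b : ZMod (w + 1) → ℕ, ∑ x, b x + 1 = n ∧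
      p = (rho K L w)^[l] (base K w b k) := by
  obtain ⟨l, y, hy, hk⟩ := gap_of_not_knows K L w hL p k h
  have hq := rho_sum K L w n p hp l
  set q := (rho K L w)^[l] p with hqdef
  have hw : 1 ≤ w := NeZero.one_le
  let b : ZMod (w + 1) → ℕ := fun x =>
    if x.val = w then y else if x.val = 0 then q.2 0 - 1 - y else q.2 (x.val : ZMod w)
  have hvw : ((w : ℕ) : ZMod (w + 1)).val = w := ZMod.val_natCast_of_lt (by omega)
  have hbw : b (w : ZMod (w + 1)) = y := by simp only [b, hvw, if_true]
  have hba : ∀ a : ZMod w, a ≠ 0 → b (a.val : ZMod (w + 1)) = q.2 a := by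
    intro a ha
    have h1 : ((a.val : ℕ) : ZMod (w + 1)).val = a.val :=
      ZMod.val_natCast_of_lt (by have := ZMod.val_lt a; omega)
    have h2 := ZMod.val_lt a
    have h3 : a.val ≠ 0 := by simpa using ha
    simp only [b, h1]
    rw [if_neg (by omega), if_neg h3]
    simp
  have hb0 : b (((0 : ZMod w).val : ℕ) : ZMod (w + 1)) = q.2 0 - 1 - y := by
    simp only [b, ZMod.val_zero, Nat.cast_zero]
    rw [if_neg (by omega)]; simp
  have hbase : base K w b k = q := by
    ext1
    · simp only [base, hbw]
      rw [hk]; push_cast; ring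
    · funext a
      by_cases ha : a = 0
      · subst ha
        simp only [base, hbw, hb0, if_true]
        omega
      · simp only [base, hba a ha, if_neg ha, add_zero]
  have hsum : ∑ x, b x + 1 = n := by
    rw [← hq, ← hbase]
    exact (base_sum K w _ b k rfl).symm
  have hq' : (rho K L w)^[l * (w - 1)] q = p := by
    rw [hqdef, ← Function.iterate_add_apply]
    have h1 : l * (w - 1) + l = l * w := by
      obtain ⟨w', hw'⟩ := Nat.exists_eq_add_of_le hw
      rw [hw']; simp; ring
    rw [h1, rho_iter_mul K L w n hKn p hp]
  refine ⟨(l * (w - 1)) % w, Nat.mod_lt _ (by omega), b, hsum, ?_⟩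
  have hper : Function.IsPeriodicPt (rho K L w) w q := rho_iter_w K L w n hKn q hq
  rw [hbase, hper.iterate_mod_apply, hq']

/-- Offsets of the users served by a single coded symbol. -/
def uo (L w : ℕ) (b : ZMod (w + 1) → ℕ) (m : ℕ) : ℕ :=
  m * L + ∑ a ∈ range m, b (a : ZMod (w + 1))

lemma uo_succ (L w : ℕ) (b : ZMod (w + 1) → ℕ) (m : ℕ) :
    uo L w b (m + 1) = uo L w b m + L + b (m : ZMod (w + 1)) := by
  simp only [uo, sum_range_succ]; ring

lemma uo_mono (L w : ℕ) (b : ZMod (w + 1) → ℕ) : Monotone (uo L w b) :=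
  monotone_nat_of_le_succ (fun m => by rw [uo_succ]; omega)

lemma uo_strictMono (L w : ℕ) (hL : 1 ≤ L) (b : ZMod (w + 1) → ℕ) : StrictMono (uo L w b) :=
  strictMono_nat_of_lt_succ (fun m => by rw [uo_succ]; omega)

lemma uo_period (K L w n : ℕ) (hKn : K = w * L + n) (b : ZMod (w + 1) → ℕ)
    (hb : ∑ x, b x + 1 = n) (m : ℕ) : uo L w b (m + (w + 1)) + 1 = uo L w b m + K + L := by
  induction m with
  | zero =>
    have : uo L w b (0 + (w + 1)) = (w + 1) * L + ∑ x, b x := by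
      rw [sum_zmod]; simp [uo]
    rw [this, hKn, ← hb]; simp [uo]; ring
  | succ m ih =>
    rw [show m + 1 + (w + 1) = (m + (w + 1)) + 1 by ring, uo_succ, uo_succ]
    have : ((m + (w + 1) : ℕ) : ZMod (w + 1)) = (m : ZMod (w + 1)) := by
      push_cast
      have := ZMod.natCast_self (w + 1)
      push_cast at this
      rw [this, add_zero]
    rw [this]; omega

lemma uo_last (K L w n : ℕ) (hKn : K = w * L + n) (b : ZMod (w + 1) → ℕ)
    (hb : ∑ x, b x + 1 = n) : uo L w b w + b (w : ZMod (w + 1)) + 1 = K := by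
  have h := uo_period K L w n hKn b hb 0
  rw [zero_add, uo_succ] at h
  simp [uo] at h ⊢
  omega

lemma uo_rot (L w : ℕ) (b : ZMod (w + 1) → ℕ) (i l : ℕ) :
    uo L w b (i + l) = uo L w b i + uo L w (fun x => b (x + (i : ZMod (w + 1)))) l := by
  induction l with
  | zero => simp [uo]
  | succ l ih =>
    rw [← add_assoc, uo_succ, uo_succ, ih]
    have : ((i + l : ℕ) : ZMod (w + 1)) = (l : ZMod (w + 1)) + i := by push_cast; ring
    rw [this]; ring

/-- Offsets at which a coded symbol is not known. -/
def U (L w : ℕ) (b : ZMod (w + 1) → ℕ) : Finset ℕ :=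
  (range (w + 1)).image (uo L w b) ∪
  ((range (w + 1)).biUnion (fun m =>
      (range (b (m : ZMod (w + 1)))).image (fun y => uo L w b m + 1 + y)) ∪
    (range w).biUnion (fun m =>
      (range (b (m : ZMod (w + 1)))).image (fun y => uo L w b m + L + y)))

lemma U_card (L w n : ℕ) (b : ZMod (w + 1) → ℕ) (hb : ∑ x, b x + 1 = n) :
    (U L w b).card + b (w : ZMod (w + 1)) ≤ 2 * n + w - 1 := by
  have h1 : ((range (w + 1)).image (uo L w b)).card ≤ w + 1 :=
    card_image_le.trans (by simp)
  have h2 : ((range (w + 1)).biUnion (fun m =>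
      (range (b (m : ZMod (w + 1)))).image (fun y => uo L w b m + 1 + y))).card ≤
      ∑ m ∈ range (w + 1), b (m : ZMod (w + 1)) := by
    refine card_biUnion_le.trans (sum_le_sum fun m _ => ?_)
    exact card_image_le.trans (by simp)
  have h3 : ((range w).biUnion (fun m =>
      (range (b (m : ZMod (w + 1)))).image (fun y => uo L w b m + L + y))).card ≤
      ∑ m ∈ range w, b (m : ZMod (w + 1)) := by
    refine card_biUnion_le.trans (sum_le_sum fun m _ => ?_)
    exact card_image_le.trans (by simp)
  rw [sum_zmod, sum_range_succ] at hb
  rw [sum_range_succ] at h2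
  have h4 := card_union_le ((range (w + 1)).image (uo L w b))
    ((range (w + 1)).biUnion (fun m =>
      (range (b (m : ZMod (w + 1)))).image (fun y => uo L w b m + 1 + y)) ∪
    (range w).biUnion (fun m =>
      (range (b (m : ZMod (w + 1)))).image (fun y => uo L w b m + L + y)))
  have h5 := card_union_le ((range (w + 1)).biUnion (fun m =>
      (range (b (m : ZMod (w + 1)))).image (fun y => uo L w b m + 1 + y)))
    ((range w).biUnion (fun m =>
      (range (b (m : ZMod (w + 1)))).image (fun y => uo L w b m + L + y)))
  unfold U
  omega

lemma struct (K L w n : ℕ) [NeZero K] [NeZero w] (hL : 1 ≤ L) (hKn : K = w * L + n)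
    (b : ZMod (w + 1) → ℕ) (hb : ∑ x, b x + 1 = n) (i : ℕ) (hi : i < w + 1) (τ k : ZMod K)
    (h : ¬ knows K L w k (base K w (fun x => b (x + (i : ZMod (w + 1))))
      (τ + ((uo L w b i : ℕ) : ZMod K)))) :
    ∃ v ∈ U L w b, k = τ + (v : ZMod K) ∧
      (v = uo L w b i ∨ (v < K ∧ ∀ m ≤ w, uo L w b m ≠ v)) := by
  have hlast := uo_last K L w n hKn b hb
  have hself : ((w + 1 : ℕ) : ZMod (w + 1)) = 0 := ZMod.natCast_self (w + 1)
  have hbetween : ∀ m v : ℕ, m ≤ w → uo L w b m < v → (m < w → v < uo L w b (m + 1)) → v < K →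
      (v < K ∧ ∀ m' ≤ w, uo L w b m' ≠ v) := by
    intro m v hm h1 h2 h3
    refine ⟨h3, fun m' hm' => ?_⟩
    rcases le_or_gt m' m with hc | hc
    · have := uo_mono L w b hc; omega
    · have := uo_mono L w b (show m + 1 ≤ m' from hc)
      have := h2 (by omega)
      omega
  have hle : ∀ m, m < w → uo L w b (m + 1) < K := by
    intro m hm
    have := uo_mono L w b (show m + 1 ≤ w from hm)
    omega
  have H1 : ∀ m y : ℕ, m ≤ w → y < b (m : ZMod (w + 1)) →
      k = τ + ((uo L w b m + 1 + y : ℕ) : ZMod K) →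
      ∃ v ∈ U L w b, k = τ + (v : ZMod K) ∧
      (v = uo L w b i ∨ (v < K ∧ ∀ m ≤ w, uo L w b m ≠ v)) := by
    intro m y hm hy hk
    refine ⟨uo L w b m + 1 + y, ?_, hk, Or.inr (hbetween m _ hm (by omega) ?_ ?_)⟩
    · refine mem_union_right _ (mem_union_left _ (mem_biUnion.2 ⟨m, by simp; omega, ?_⟩))
      exact mem_image.2 ⟨y, by simpa using hy, rfl⟩
    · intro _; rw [uo_succ]; omega
    · rcases hm.lt_or_eq with hm | rfl
      · have := hle m hm; rw [uo_succ] at this; omega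
      · omega
  have H2 : ∀ m y : ℕ, m < w → y < b (m : ZMod (w + 1)) →
      k = τ + ((uo L w b m + L + y : ℕ) : ZMod K) →
      ∃ v ∈ U L w b, k = τ + (v : ZMod K) ∧
      (v = uo L w b i ∨ (v < K ∧ ∀ m ≤ w, uo L w b m ≠ v)) := by
    intro m y hm hy hk
    have := hle m hm
    rw [uo_succ] at this
    refine ⟨uo L w b m + L + y, ?_, hk, Or.inr (hbetween m _ hm.le (by omega) ?_ ?_)⟩
    · refine mem_union_right _ (mem_union_right _ (mem_biUnion.2 ⟨m, by simpa using hm, ?_⟩))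
      exact mem_image.2 ⟨y, by simpa using hy, rfl⟩
    · intro _; rw [uo_succ]; omega
    · omega
  set β : ZMod (w + 1) → ℕ := fun x => b (x + (i : ZMod (w + 1))) with hβ
  have hβsum : ∑ x, β x + 1 = n := by
    rw [← hb]; congr 1
    exact Fintype.sum_equiv (Equiv.addRight (i : ZMod (w + 1))) _ _ (fun x => rfl)
  set j := τ + ((uo L w b i : ℕ) : ZMod K) with hj
  have hbs := base_sum K w n β j hβsum
  obtain ⟨l', y, hy, hk⟩ := gap_of_not_knows K L w hL _ k h
  have hper : Function.IsPeriodicPt (rho K L w) w (base K w β j) := rho_iter_w K L w n hKn _ hbs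
  rw [← hper.iterate_mod_apply] at hy hk
  have hw : 1 ≤ w := NeZero.one_le
  obtain ⟨l, hl⟩ : ∃ l, l = l' % w := ⟨_, rfl⟩
  have hlw : l < w := by rw [hl]; exact Nat.mod_lt _ (by omega)
  rw [← hl, rho_iter] at hy hk
  simp only at hy hk
  rw [base_psum K w β j l hlw.le] at hk
  by_cases hl0 : l = 0
  · subst hl0
    simp only [base, Nat.cast_zero, add_zero, if_true, ZMod.val_zero, zero_mul, range_zero,
      sum_empty] at hy hk
    have hk' : k = j + (y : ZMod K) - ((β (w : ZMod (w + 1)) : ℕ) : ZMod K) := by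
      rw [hk]; push_cast; ring
    have hβ0 : β 0 = b (i : ZMod (w + 1)) := by simp [hβ]
    rcases lt_trichotomy y (β (w : ZMod (w + 1))) with hc | hc | hc
    · -- to the left of the user
      rcases Nat.eq_zero_or_pos i with rfl | hipos
      · have hβw : β (w : ZMod (w + 1)) = b (w : ZMod (w + 1)) := by simp [hβ]
        rw [hβw] at hc hk'
        refine H1 w y le_rfl hc ?_
        rw [hk', hj]
        have : ((uo L w b w + 1 + y : ℕ) : ZMod K) =
            (K : ZMod K) + y - ((b (w : ZMod (w + 1)) : ℕ) : ZMod K) := by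
          rw [← hlast]; push_cast; ring
        rw [this, ZMod.natCast_self]
        simp [uo]; ring
      · obtain ⟨i', rfl⟩ : ∃ i', i = i' + 1 := ⟨i - 1, by omega⟩
        have hβw : β (w : ZMod (w + 1)) = b (i' : ZMod (w + 1)) := by
          simp only [hβ]; congr 1
          have : ((w : ℕ) : ZMod (w + 1)) + ((i' + 1 : ℕ) : ZMod (w + 1)) =
            i' + ((w + 1 : ℕ) : ZMod (w + 1)) := by push_cast; ring
          rw [this, hself, add_zero]
        rw [hβw] at hc hk'
        refine H2 i' y (by omega) hc ?_
        rw [hk', hj, uo_succ]; push_cast; ring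
    · refine ⟨uo L w b i, ?_, ?_, Or.inl rfl⟩
      · exact mem_union_left _ (mem_image.2 ⟨i, by simpa using hi, rfl⟩)
      · rw [hk', hc, hj]; ring
    · refine H1 i (y - β (w : ZMod (w + 1)) - 1) (by omega) (by omega) ?_
      rw [hk', hj, show uo L w b i + 1 + (y - β (w : ZMod (w + 1)) - 1) =
        uo L w b i + (y - β (w : ZMod (w + 1))) by omega]
      push_cast [Nat.cast_sub hc.le]
      ring
  · have hlne : ((l : ℕ) : ZMod w) ≠ 0 := by
      intro h0
      have := congrArg ZMod.val h0
      rw [ZMod.val_natCast_of_lt hlw, ZMod.val_zero] at this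
      exact hl0 this
    have hy' : y < b ((i + l : ℕ) : ZMod (w + 1)) := by
      simp only [base, zero_add, ZMod.val_natCast_of_lt hlw, if_neg hlne, add_zero] at hy
      rw [hβ] at hy
      simp only at hy
      rwa [show ((i + l : ℕ) : ZMod (w + 1)) = (l : ZMod (w + 1)) + i by push_cast; ring]
    have hk' : k = τ + ((uo L w b (i + l) + 1 + y : ℕ) : ZMod K) := by
      rw [hk, if_neg hl0, uo_rot, ← hβ]
      simp only [base, hj]
      rw [show uo L w β l = l * L + ∑ a ∈ range l, β (a : ZMod (w + 1)) from rfl]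
      push_cast; ring
    rcases le_or_gt (i + l) w with hc | hc
    · exact H1 (i + l) y hc hy' hk'
    · obtain ⟨m, hm⟩ : ∃ m, i + l = m + (w + 1) := ⟨i + l - (w + 1), by omega⟩
      rw [hm] at hy' hk'
      have hcast : ((m + (w + 1) : ℕ) : ZMod (w + 1)) = (m : ZMod (w + 1)) := by
        rw [Nat.cast_add, hself, add_zero]
      rw [hcast] at hy'
      refine H2 m y (by omega) hy' ?_
      rw [hk', uo_period K L w n hKn b hb]
      push_cast
      rw [ZMod.natCast_self]; ring

/-- Vandermonde-type decoding. -/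
lemma mds {ι V : Type*} [Field V] [Fintype ι] (α : ι → V) (hα : Function.Injective α)
    (D : ι → V) (q : ℕ) (s : Finset ι) (hs : s.card ≤ q) (hD : ∀ t, t ∉ s → D t = 0)
    (h : ∀ e < q, ∑ t, α t ^ e * D t = 0) : ∀ t, D t = 0 := by
  classical
  intro t0
  by_cases ht0 : t0 ∈ s
  swap
  · exact hD t0 ht0
  let p : Polynomial V := ∏ t ∈ s.erase t0, (Polynomial.X - Polynomial.C (α t))
  have hdeg : p.natDegree < q := by
    have : p.natDegree = (s.erase t0).card := by
      simp only [p]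
      exact Polynomial.natDegree_finsetProd_X_sub_C_eq_card _ _
    rw [this, card_erase_of_mem ht0]
    have := card_pos.2 ⟨t0, ht0⟩
    omega
  have h1 : ∑ t, p.eval (α t) * D t = 0 := by
    simp only [Polynomial.eval_eq_sum_range' hdeg, sum_mul]
    rw [sum_comm]
    refine sum_eq_zero fun e he => ?_
    simp only [mul_assoc]
    rw [← mul_sum, h e (mem_range.1 he), mul_zero]
  rw [Fintype.sum_eq_single t0] at h1
  · rcases mul_eq_zero.1 h1 with h2 | h2
    · exfalso
      simp only [p, Polynomial.eval_prod, prod_eq_zero_iff] at h2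
      obtain ⟨t, ht, h3⟩ := h2
      simp only [Polynomial.eval_sub, Polynomial.eval_X, Polynomial.eval_C, sub_eq_zero] at h3
      exact (mem_erase.1 ht).1 (hα h3).symm
    · exact h2
  · intro t ht
    by_cases hts : t ∈ s
    · have : p.eval (α t) = 0 := by
        simp only [p, Polynomial.eval_prod]
        exact prod_eq_zero (mem_erase.2 ⟨ht, hts⟩) (by simp)
      rw [this, zero_mul]
    · rw [hD t hts, mul_zero]

lemma exists_sh (w : ℕ) (b : ZMod (w + 1) → ℕ) : ∃ x, ∀ y, b y ≤ b x :=
  Finite.exists_max b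

/-- Position of a largest entry. -/
noncomputable def sh (w : ℕ) (b : ZMod (w + 1) → ℕ) : ZMod (w + 1) := (exists_sh w b).choose

lemma sh_spec (w : ℕ) (b : ZMod (w + 1) → ℕ) (y) : b y ≤ b (sh w b) :=
  (exists_sh w b).choose_spec y

/-- The rotation of `b` whose last entry is a largest one. -/
noncomputable def bt (w : ℕ) (b : ZMod (w + 1) → ℕ) : ZMod (w + 1) → ℕ :=
  fun x => b (x + (sh w b + 1))

lemma bt_last (w : ℕ) (b : ZMod (w + 1) → ℕ) : bt w b (w : ZMod (w + 1)) = b (sh w b) := by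
  have hself : ((w + 1 : ℕ) : ZMod (w + 1)) = 0 := ZMod.natCast_self (w + 1)
  push_cast at hself
  unfold bt
  rw [show (w : ZMod (w + 1)) + (sh w b + 1) = sh w b + ((w : ZMod (w + 1)) + 1) by ring, hself,
    add_zero]

lemma bt_sum (w : ℕ) (b : ZMod (w + 1) → ℕ) : ∑ x, bt w b x = ∑ x, b x :=
  Fintype.sum_equiv (Equiv.addRight (sh w b + 1)) _ _ (fun x => rfl)

/-- The `i`-th user served by the coded symbol `τ` of round `b`. -/
noncomputable def usr (K L w : ℕ) (b : ZMod (w + 1) → ℕ) (τ : ZMod K) (i : ZMod (w + 1)) :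
    ZMod K := τ + ((uo L w (bt w b) i.val : ℕ) : ZMod K)

/-- The index of the packet that it gets. -/
noncomputable def idx (K L w : ℕ) (b : ZMod (w + 1) → ℕ) (l : ℕ) (τ : ZMod K)
    (i : ZMod (w + 1)) : ZMod K × (ZMod w → ℕ) :=
  (rho K L w)^[l] (base K w (fun x => bt w b (x + i)) (usr K L w b τ i))

/-- The coded symbols. -/
noncomputable def zz (K L w : ℕ) {V : Type*} [Field V]
    (W : ZMod K → ZMod K × (ZMod w → ℕ) → ZMod (w + 1) → V)
    (b : ZMod (w + 1) → ℕ) (l : ℕ) (τ : ZMod K) : V :=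
  ∑ i, W (usr K L w b τ i) (idx K L w b l τ i) (i + (sh w b + 1))

/-- number of transmissions in round `b` -/
noncomputable def qq (K w n : ℕ) (b : ZMod (w + 1) → ℕ) : ℕ :=
  min (2 * n + w - 1 - b (sh w b)) K

lemma core (K L w n : ℕ) [NeZero K] [NeZero w] (hL : 1 ≤ L) (hKn : K = w * L + n)
    {V : Type*} [Field V] (α : ZMod K → V) (hα : Function.Injective α)
    (W W' : ZMod K → ZMod K × (ZMod w → ℕ) → ZMod (w + 1) → V) (k : ZMod K)
    (hside : ∀ j p r, ∑ x, p.2 x = n → knows K L w k p → W j p r = W' j p r)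
    (henc : ∀ b : ZMod (w + 1) → ℕ, ∑ x, b x + 1 = n → ∀ l < w, ∀ e < qq K w n b,
      ∑ τ, α τ ^ e * zz K L w W b l τ = ∑ τ, α τ ^ e * zz K L w W' b l τ)
    (p : ZMod K × (ZMod w → ℕ)) (hp : ∑ x, p.2 x = n) (r : ZMod (w + 1)) :
    W k p r = W' k p r := by
  classical
  by_cases hkn : knows K L w k p
  · exact hside k p r hp hkn
  obtain ⟨l, hl, b', hb', hpb⟩ := surj K L w n hL hKn p hp k hkn
  let b : ZMod (w + 1) → ℕ := fun x => b' (x - r)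
  have hb : ∑ x, b x + 1 = n := by
    rw [← hb']; congr 1
    exact Fintype.sum_equiv (Equiv.subRight r) _ _ (fun x => rfl)
  have hbt : ∑ x, bt w b x + 1 = n := by rw [bt_sum]; exact hb
  let i : ZMod (w + 1) := r - (sh w b + 1)
  let τ : ZMod K := k - ((uo L w (bt w b) i.val : ℕ) : ZMod K)
  have husr : usr K L w b τ i = k := by simp [usr, τ]
  have hrot : (fun x => bt w b (x + i)) = b' := by
    funext x
    simp only [bt, b, i]
    congr 1; ring
  have hidx : idx K L w b l τ i = p := by
    rw [idx, husr, hrot, ← hpb]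
  have hr : i + (sh w b + 1) = r := by simp only [i]; ring
  -- structure of the unknown packets
  have hstr : ∀ (τ' : ZMod K) (i' : ZMod (w + 1)),
      W (usr K L w b τ' i') (idx K L w b l τ' i') (i' + (sh w b + 1)) ≠
      W' (usr K L w b τ' i') (idx K L w b l τ' i') (i' + (sh w b + 1)) →
      ∃ v ∈ U L w (bt w b), k = τ' + (v : ZMod K) ∧
      (v = uo L w (bt w b) i'.val ∨ (v < K ∧ ∀ m ≤ w, uo L w (bt w b) m ≠ v)) := by
    intro τ' i' hne
    have hsum : ∑ x, (base K w (fun x => bt w b (x + i')) (usr K L w b τ' i')).2 x = n := by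
      apply base_sum
      rw [← hbt]; congr 1
      exact Fintype.sum_equiv (Equiv.addRight i') _ _ (fun x => rfl)
    apply struct K L w n hL hKn (bt w b) hbt i'.val (ZMod.val_lt i')
    intro hkn'
    apply hne
    apply hside
    · exact rho_sum K L w n _ hsum l
    · apply knows_iter K L w n hKn _ hsum
      simpa [usr] using hkn'
  have hD := mds α hα (fun t => zz K L w W b l t - zz K L w W' b l t) (qq K w n b)
    (univ.filter fun t => ∃ v ∈ U L w (bt w b), k = t + (v : ZMod K)) ?_ ?_ ?_ τ
  · have hz : zz K L w W b l τ = zz K L w W' b l τ := sub_eq_zero.1 hD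
    unfold zz at hz
    rw [← add_sum_erase univ _ (mem_univ i), ← add_sum_erase univ _ (mem_univ i)] at hz
    have hrest : ∀ i' ∈ univ.erase i,
        W (usr K L w b τ i') (idx K L w b l τ i') (i' + (sh w b + 1)) =
        W' (usr K L w b τ i') (idx K L w b l τ i') (i' + (sh w b + 1)) := by
      intro i' hi'
      by_contra hne
      obtain ⟨v, -, hkv, hv⟩ := hstr τ i' hne
      have hlast := uo_last K L w n hKn (bt w b) hbt
      have hiw : i.val ≤ w := Nat.lt_succ_iff.1 (ZMod.val_lt i)
      have hiw' : i'.val ≤ w := Nat.lt_succ_iff.1 (ZMod.val_lt i')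
      have hlt : uo L w (bt w b) i.val < K := by
        have := uo_mono L w (bt w b) hiw; omega
      have hvK : v < K := by
        rcases hv with hv | hv
        · have := uo_mono L w (bt w b) hiw'; omega
        · exact hv.1
      have heq : uo L w (bt w b) i.val = v := by
        have h1 : ((uo L w (bt w b) i.val : ℕ) : ZMod K) = (v : ZMod K) := by
          have h2 : k = τ + ((uo L w (bt w b) i.val : ℕ) : ZMod K) := husr.symm
          rw [h2] at hkv
          exact add_left_cancel hkv
        have h3 := congrArg ZMod.val h1
        rwa [ZMod.val_natCast_of_lt hlt, ZMod.val_natCast_of_lt hvK] at h3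
      rcases hv with hv | hv
      · have := (uo_strictMono L w hL (bt w b)).injective (heq.trans hv)
        exact (mem_erase.1 hi').1 (ZMod.val_injective _ this).symm
      · exact hv.2 _ hiw heq
    rw [sum_congr rfl hrest, husr, hidx, hr] at hz
    exact add_right_cancel hz
  · refine le_min ?_ ?_
    · have h1 : (univ.filter fun t : ZMod K =>
          ∃ v ∈ U L w (bt w b), k = t + (v : ZMod K)) ⊆
          (U L w (bt w b)).image (fun v : ℕ => k - (v : ZMod K)) := by
        intro t ht
        obtain ⟨v, hv, hkv⟩ := (mem_filter.1 ht).2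
        exact mem_image.2 ⟨v, hv, by rw [hkv]; ring⟩
      have h2 := (card_le_card h1).trans card_image_le
      have h3 := U_card L w n (bt w b) hbt
      rw [bt_last] at h3
      omega
    · exact (card_le_univ _).trans (by simp [ZMod.card])
  · intro t ht
    rw [sub_eq_zero]
    refine sum_congr rfl fun i' _ => ?_
    by_contra hne
    obtain ⟨v, hv, hkv, -⟩ := hstr t i' hne
    exact ht (mem_filter.2 ⟨mem_univ _, v, hv, hkv⟩)
  · intro e he
    simp only [mul_sub, sum_sub_distrib]
    rw [henc b hb l hl e he, sub_self]

lemma enum {A : Type*} [Nonempty A] (s : Finset A) : ∃ (dec : ℕ → A) (enc : A → ℕ),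
    (∀ a ∈ s, enc a ∈ Icc 1 s.card ∧ dec (enc a) = a) ∧
    (∀ q ∈ Icc 1 s.card, dec q ∈ s ∧ enc (dec q) = q) := by
  classical
  let e := s.equivFin
  refine ⟨fun q => if h : q - 1 < s.card then (e.symm ⟨q - 1, h⟩ : A) else Classical.arbitrary A,
    fun a => if h : a ∈ s then (e ⟨a, h⟩ : ℕ) + 1 else 0, ?_, ?_⟩
  · intro a ha
    have := (e ⟨a, ha⟩).2
    simp only [dif_pos ha, mem_Icc, Nat.add_sub_cancel, this, dif_pos]
    refine ⟨by omega, by simp⟩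
  · intro q hq
    have hq' := mem_Icc.1 hq
    have h : q - 1 < s.card := by omega
    simp only [dif_pos h]
    refine ⟨coe_mem _, ?_⟩
    rw [dif_pos (coe_mem _)]
    simp
    omega

lemma angMod_cast (K : ℕ) [NeZero K] (m : ℤ) : ((angMod m K : ℕ) : ZMod K) = (m : ZMod K) := by
  unfold angMod
  have hK : (K : ℤ) ≠ 0 := by exact_mod_cast NeZero.ne K
  have h1 : ((m % (K : ℤ) : ℤ) : ZMod K) = (m : ZMod K) := ZMod.intCast_mod m K
  split_ifs with h
  · rw [← h1, h]; simp
  · rw [← h1]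
    have h2 : (((m % (K : ℤ)).toNat : ℕ) : ℤ) = m % (K : ℤ) :=
      Int.toNat_of_nonneg (Int.emod_nonneg m hK)
    rw [← h2]; simp

lemma exists_field (K : ℕ) [NeZero K] : ∃ (V : Type) (_ : Field V),
    Nonempty (V ≃ (Fin K → Bool)) ∧ ∃ α : ZMod K → V, Function.Injective α := by
  haveI : Fact (Nat.Prime 2) := ⟨Nat.prime_two⟩
  have hcard : Nat.card (GaloisField 2 K) = 2 ^ K := GaloisField.card 2 K (NeZero.ne K)
  haveI : Finite (GaloisField 2 K) := Nat.finite_of_card_ne_zero (by rw [hcard]; positivity)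
  refine ⟨GaloisField 2 K, inferInstance, ?_, ?_⟩
  · apply Finite.card_eq.1
    rw [hcard]; simp
  · have : Fintype (GaloisField 2 K) := Fintype.ofFinite _
    have h : Fintype.card (ZMod K) ≤ Fintype.card (GaloisField 2 K) := by
      rw [← Nat.card_eq_fintype_card (α := GaloisField 2 K), hcard, ZMod.card]
      exact Nat.lt_two_pow_self.le
    obtain ⟨f⟩ := Function.Embedding.nonempty_of_card_le h
    exact ⟨f, f.injective⟩

lemma store_card (K L w n : ℕ) [NeZero K] [NeZero w] (hKn : K = w * L + n) (x : ZMod K) :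
    ∃ T : Finset (ZMod K × (ZMod w → ℕ)),
      T.card ≤ w * (piAntidiag (univ : Finset (ZMod w)) n).card ∧
      ∀ p : ZMod K × (ZMod w → ℕ), ∑ a, p.2 a = n → stores K L w x p → p ∈ T := by
  classical
  refine ⟨(range w ×ˢ piAntidiag (univ : Finset (ZMod w)) n).image (fun u =>
    (x - ((u.1 * L + ∑ a ∈ range u.1, u.2 (a : ZMod w) : ℕ) : ZMod K), u.2)), ?_, ?_⟩
  · exact card_image_le.trans (by simp)
  · rintro p hp ⟨l, hl⟩
    have hper : Function.IsPeriodicPt (rho K L w) w p := rho_iter_w K L w n hKn _ hp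
    rw [← hper.iterate_mod_apply, rho_iter] at hl
    refine mem_image.2 ⟨(l % w, p.2), ?_, ?_⟩
    · simp only [mem_product, mem_range, mem_piAntidiag]
      exact ⟨Nat.mod_lt _ (NeZero.pos w), hp, by simp⟩
    · ext1
      · rw [← hl]; simp
      · rfl

lemma transfer (K L w n : ℕ) (hw : 1 ≤ w) (hKn : K = w * L + n)
    (B : Finset (Fin (w + 1) → ℕ))
    (hB : ∀ b : Fin (w + 1) → ℕ, b ∈ B ↔ (∑ j, (b j : ℤ)) = (K : ℤ) - (w : ℤ) * (L : ℤ) - 1) :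
    ∃ B2 : Finset (ZMod (w + 1) → ℕ),
      (∀ b : ZMod (w + 1) → ℕ, b ∈ B2 ↔ ∑ x, b x + 1 = n) ∧
      ∑ b ∈ B, min (2 * ((K : ℝ) - (w : ℝ) * (L : ℝ)) + (w : ℝ) - 1 -
        ((Finset.univ.sup b : ℕ) : ℝ)) (K : ℝ) = ((∑ b ∈ B2, qq K w n b : ℕ) : ℝ) := by
  have hB' : ∀ b : Fin (w + 1) → ℕ, b ∈ B ↔ ∑ x, b x + 1 = n := by
    intro b
    rw [hB b, hKn]
    push_cast
    constructor
    · intro h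
      have : ((∑ x, b x : ℕ) : ℤ) + 1 = n := by push_cast; linarith
      exact_mod_cast this
    · intro h
      rw [← h]; push_cast; ring
  have hsup : ∀ b : Fin (w + 1) → ℕ, ∃ s : ℕ, Finset.univ.sup b = s ∧ s ≤ ∑ x, b x ∧
      qq K w n b = min (2 * n + w - 1 - s) K := by
    intro b
    refine ⟨b (sh w b), ?_, ?_, rfl⟩
    · apply le_antisymm
      · exact Finset.sup_le fun y _ => sh_spec w b y
      · exact Finset.le_sup (f := b) (Finset.mem_univ (α := Fin (w + 1)) (sh w b))
    · exact Finset.single_le_sum (f := b) (fun _ _ => Nat.zero_le _)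
          (Finset.mem_univ (α := Fin (w + 1)) (sh w b))
  refine ⟨B, hB', ?_⟩
  refine Eq.trans ?_ (Nat.cast_sum B (fun b : Fin (w + 1) → ℕ => qq K w n b)).symm
  refine Finset.sum_congr rfl fun b hb => ?_
  have hbn := (hB' b).1 hb
  obtain ⟨s, h1, h2, h3⟩ := hsup b
  refine Eq.trans ?_ (congrArg (fun m : ℕ => (m : ℝ)) h3).symm
  rw [h1, Nat.cast_min, Nat.cast_sub (by omega), Nat.cast_sub (by omega)]
  congr 1
  rw [hKn]; push_cast; ring

end CCDN

open CCDN
/-- Theorem 6 of the paper: for the `(N,K,L)`-CCDN at memory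
point `M = wN/K` (`1 ≤ w ≤ ⌊K/L⌋`), there exist a file size `F`, an uncoded
placement storing at most `M·F` bits per cache, and a broadcast delivery scheme
of length `ℓ` correct for all demands, with rate `ℓ/F ≤ R_new(M)`, where
`R_new(M) = Σ_{b∈B} min{2(K−wL)+w−1−b̂, K} / (S·(w+1))`, `B` is the set of weak
`(w+1)`-compositions of `K−wL−1`, `b̂` the largest component of `b`, and
`S = (K/w)·C(K−wL+w−1, w−1)`.  Consequently `R*(M) ≤ R_new(M)`. -/
theorem stmt13 (N K L w : ℕ) (hK : 1 ≤ K) (hN : K ≤ N) (hL : 1 ≤ L)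
    (hw : 1 ≤ w) (hwL : w ≤ K / L)
    (M : ℝ) (hM : M = (w : ℝ) * (N : ℝ) / (K : ℝ))
    (B : Finset (Fin (w + 1) → ℕ))
    (hB : ∀ b : Fin (w + 1) → ℕ, b ∈ B ↔ (∑ j, (b j : ℤ)) = (K : ℤ) - (w : ℤ) * (L : ℤ) - 1)
    (S : ℝ) (hS : S = (K : ℝ) / (w : ℝ) * (Nat.choose (K - w * L + w - 1) (w - 1) : ℝ))
    (Rnew : ℝ)
    (hR : Rnew = (∑ b ∈ B,
        min (2 * ((K : ℝ) - (w : ℝ) * (L : ℝ)) + (w : ℝ) - 1 - ((Finset.univ.sup b : ℕ) : ℝ))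
          (K : ℝ)) / (S * ((w : ℝ) + 1))) :
    ∃ F : ℕ, 1 ≤ F ∧ ∃ ℓ : ℕ,
      (∃ P : ℕ → Finset (ℕ × ℕ),
        -- cache `c` stores the bits of the `N` files indexed by `P c`
        (∀ c, P c ⊆ Finset.Icc 1 N ×ˢ Finset.Icc 1 F) ∧
        -- each cache stores at most `M·F` bits
        (∀ c, ((P c).card : ℝ) ≤ M * (F : ℝ)) ∧
        -- broadcast encoder: a function of the demand vector and the file bits
        ∃ E : (ℕ → ℕ) → ((ℕ × ℕ) → Bool) → Fin ℓ → Bool,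
        -- decoder of user `k`: a function of the demand vector, the broadcast,
        -- and the bits stored in the `L` caches `<k>_K, …, <k+L−1>_K`
        ∃ D : ∀ _k : ℕ, (ℕ → ℕ) → (Fin ℓ → Bool) →
            (↥((Finset.range L).biUnion fun j => P (angMod ((_k : ℤ) + (j : ℤ)) K)) → Bool) →
            ℕ → Bool,
          ∀ d : ℕ → ℕ, (∀ k ∈ Finset.Icc 1 K, d k ∈ Finset.Icc 1 N) →
            ∀ x : ℕ × ℕ → Bool, ∀ k ∈ Finset.Icc 1 K, ∀ f ∈ Finset.Icc 1 F,
              D k d (E d x) (fun q => x q.1) f = x (d k, f)) ∧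
      (ℓ : ℝ) / (F : ℝ) ≤ Rnew := by
  classical
  have : NeZero K := ⟨by omega⟩
  have : NeZero w := ⟨by omega⟩
  have hwLK : w * L ≤ K := by
    rw [Nat.le_div_iff_mul_le (by omega)] at hwL; exact hwL
  obtain ⟨n, hKn⟩ : ∃ n, K = w * L + n := ⟨K - w * L, by omega⟩
  obtain ⟨B2, hB', hsum⟩ : ∃ B2 : Finset (ZMod (w + 1) → ℕ),
      (∀ b : ZMod (w + 1) → ℕ, b ∈ B2 ↔ ∑ x, b x + 1 = n) ∧
      ∑ b ∈ B, min (2 * ((K : ℝ) - (w : ℝ) * (L : ℝ)) + (w : ℝ) - 1 -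
        ((Finset.univ.sup b : ℕ) : ℝ)) (K : ℝ) = ((∑ b ∈ B2, qq K w n b : ℕ) : ℝ) :=
    transfer K L w n hw hKn B hB
  obtain ⟨V, instV, ⟨φ⟩, α, hα⟩ := exists_field K
  let G : Finset (ZMod w → ℕ) := piAntidiag (univ : Finset (ZMod w)) n
  have hGcard : G.card = Nat.choose (K - w * L + w - 1) (w - 1) := by
    have h1 : G.card = (w + n - 1).choose n := by
      have h2 := Finset.map_sym_eq_piAntidiag (univ : Finset (ZMod w)) n
      have h3 : G.card = ((univ : Finset (ZMod w)).sym n).card := by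
        simp only [G]
        rw [← h2, Finset.card_map]
      rw [h3, Finset.sym_univ, Finset.card_univ, Sym.card_sym_eq_choose, ZMod.card]
    rw [h1, show K - w * L + w - 1 = w + n - 1 by omega]
    exact Nat.choose_symm_of_eq_add (by omega)
  let Idx : Finset ((ZMod K × (ZMod w → ℕ)) × ZMod (w + 1) × Fin K) :=
    (univ ×ˢ G) ×ˢ univ
  have hmemIdx : ∀ p r s, ((p, r, s) ∈ Idx ↔ ∑ x, p.2 x = n) := by
    intro p r s
    simp [Idx, G, mem_piAntidiag]
  obtain ⟨dec, enc, henc, hdec⟩ := enum Idx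
  have hGpos : 0 < G.card := by
    rw [hGcard]; exact Nat.choose_pos (by omega)
  have hIcard : Idx.card = K * G.card * ((w + 1) * K) := by
    simp only [Idx, card_product, card_univ, Fintype.card_prod, ZMod.card, Fintype.card_fin]
  let TX := Σ b : B2, Fin w × Fin (qq K w n b.1) × Fin K
  let eTX : TX ≃ Fin (Fintype.card TX) := Fintype.equivFin TX
  have hTX : Fintype.card TX = ∑ b ∈ B2, w * (qq K w n b * K) := by
    simp only [TX, Fintype.card_sigma, Fintype.card_prod, Fintype.card_fin]
    exact Finset.sum_coe_sort B2 (fun b => w * (qq K w n b * K))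
  let P : ℕ → Finset (ℕ × ℕ) := fun c =>
    (Finset.Icc 1 N ×ˢ Finset.Icc 1 Idx.card).filter
      (fun u => stores K L w (c : ZMod K) (dec u.2).1)
  -- file contents as field elements; users are represented by integers modulo `K`
  let rep : ZMod K → ℕ := fun j => angMod (j.val : ℤ) K
  have hrep : ∀ k ∈ Finset.Icc 1 K, rep (k : ZMod K) = k := by
    intro k hk
    have hk' := Finset.mem_Icc.1 hk
    simp only [rep, angMod, ZMod.val_natCast]
    rcases hk'.2.lt_or_eq with h | h
    · rw [Nat.mod_eq_of_lt h, Int.emod_eq_of_lt (by omega) (by omega), if_neg (by omega)]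
      simp
    · subst h; simp
  have hrepmem : ∀ j : ZMod K, rep j ∈ Finset.Icc 1 K := by
    intro j
    have hj := ZMod.val_lt j
    simp only [rep, angMod, Finset.mem_Icc]
    rw [Int.emod_eq_of_lt (by omega) (by omega)]
    split_ifs <;> omega
  let WW : (ℕ → ℕ) → ((ℕ × ℕ) → Bool) →
      ZMod K → ZMod K × (ZMod w → ℕ) → ZMod (w + 1) → V := fun d x j p r =>
    φ.symm (fun s => x (d (rep j), enc (p, r, s)))
  let E0 : (ℕ → ℕ) → ((ℕ × ℕ) → Bool) → TX → Bool := fun d x u =>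
    φ (∑ τ, α τ ^ (u.2.2.1 : ℕ) * zz K L w (WW d x) u.1.1 u.2.1 τ) u.2.2.2
  let E : (ℕ → ℕ) → ((ℕ × ℕ) → Bool) → Fin (Fintype.card TX) → Bool := fun d x u =>
    E0 d x (eTX.symm u)
  have hkey : ∀ d : ℕ → ℕ, (∀ k ∈ Finset.Icc 1 K, d k ∈ Finset.Icc 1 N) →
      ∀ x x' : ℕ × ℕ → Bool, ∀ k ∈ Finset.Icc 1 K, E d x = E d x' →
      (∀ q ∈ (Finset.range L).biUnion (fun j => P (angMod ((k : ℤ) + (j : ℤ)) K)), x q = x' q) →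
      ∀ f ∈ Finset.Icc 1 Idx.card, x (d k, f) = x' (d k, f) := by
    intro d hd x x' k hk hE hside f hf
    have hdf := hdec f hf
    obtain ⟨p, r, s, hps⟩ : ∃ p r s, dec f = (p, r, s) := ⟨_, _, _, rfl⟩
    rw [hps] at hdf
    have hp : ∑ a, p.2 a = n := (hmemIdx p r s).1 hdf.1
    have hc := core K L w n hL hKn α hα (WW d x) (WW d x') (k : ZMod K) ?_ ?_ p hp r
    · have h1 := congrFun (φ.symm.injective hc) s
      rw [hrep k hk, hdf.2] at h1
      exact h1
    · rintro j p' r' hp' ⟨t, ht, hst⟩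
      simp only [WW]
      congr 1
      funext s'
      have he := henc (p', r', s') ((hmemIdx p' r' s').2 hp')
      apply hside
      refine Finset.mem_biUnion.2 ⟨t, Finset.mem_range.2 ht, ?_⟩
      refine Finset.mem_filter.2 ⟨Finset.mem_product.2 ⟨hd _ (hrepmem j), he.1⟩, ?_⟩
      simp only [he.2]
      rw [angMod_cast]
      push_cast
      exact hst
    · intro b hb l hl e he
      apply φ.injective
      funext s'
      have h0 : ∀ t : TX, E0 d x t = E0 d x' t := by
        intro t
        have h1 : E0 d x (eTX.symm (eTX t)) = E0 d x' (eTX.symm (eTX t)) := congrFun hE (eTX t)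
        rwa [Equiv.symm_apply_apply] at h1
      exact h0 ⟨⟨b, (hB' b).2 hb⟩, ⟨l, hl⟩, ⟨e, he⟩, s'⟩
  refine ⟨Idx.card, ?_, Fintype.card TX, ⟨P, ?_, ?_, E, ?_⟩, ?_⟩
  · rw [hIcard]
    have : 0 < K := by omega
    exact Nat.succ_le_of_lt (by positivity)
  · intro c; exact Finset.filter_subset _ _
  · intro c
    obtain ⟨T, hTc, hT⟩ := store_card K L w n hKn (c : ZMod K)
    have h1 : (P c).card ≤ N * (w * G.card * ((w + 1) * K)) := by
      have h2 : (P c).card ≤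
          ((Finset.Icc 1 N) ×ˢ (T ×ˢ (univ : Finset (ZMod (w + 1) × Fin K)))).card := by
        refine Finset.card_le_card_of_injOn (fun u => (u.1, dec u.2)) ?_ ?_
        · intro u hu
          have hu' := Finset.mem_filter.1 (Finset.mem_coe.1 hu)
          have hu1 := Finset.mem_product.1 hu'.1
          have hd := (hdec u.2 hu1.2).1
          refine Finset.mem_coe.2 (Finset.mem_product.2 ⟨hu1.1, Finset.mem_product.2
            ⟨hT _ ?_ hu'.2, Finset.mem_univ _⟩⟩)
          exact (hmemIdx (dec u.2).1 (dec u.2).2.1 (dec u.2).2.2).1 hd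
        · intro u hu v hv huv
          have hu1 := Finset.mem_product.1 (Finset.mem_filter.1 (Finset.mem_coe.1 hu)).1
          have hv1 := Finset.mem_product.1 (Finset.mem_filter.1 (Finset.mem_coe.1 hv)).1
          have h3 := Prod.ext_iff.1 huv
          refine Prod.ext h3.1 ?_
          rw [← (hdec u.2 hu1.2).2, ← (hdec v.2 hv1.2).2]
          exact congrArg enc h3.2
      refine h2.trans ?_
      simp only [Finset.card_product, Finset.card_univ, Fintype.card_prod, ZMod.card,
        Fintype.card_fin, Nat.card_Icc, Nat.add_sub_cancel]
      gcongr
    have h2 : M * (Idx.card : ℝ) = ((N * (w * G.card * ((w + 1) * K)) : ℕ) : ℝ) := by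
      rw [hM, hIcard]
      have : (K : ℝ) ≠ 0 := by exact_mod_cast NeZero.ne K
      push_cast
      field_simp
    rw [h2]
    exact_mod_cast h1
  · refine ⟨fun k d y s f =>
      if h : ∃ x' : ℕ × ℕ → Bool, E d x' = y ∧ (fun q => x' q.1) = s then
        h.choose (d k, f) else false, ?_⟩
    intro d hd x k hk f hf
    have hex : ∃ x' : ℕ × ℕ → Bool, E d x' = E d x ∧
        (fun q : ↥((Finset.range L).biUnion fun j => P (angMod ((k : ℤ) + (j : ℤ)) K)) =>
          x' q.1) = (fun q => x q.1) := ⟨x, rfl, rfl⟩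
    simp only
    rw [dif_pos hex]
    have hs := hex.choose_spec
    refine hkey d hd _ x k hk hs.1 ?_ f hf
    intro q hq
    exact congrFun hs.2 ⟨q, hq⟩
  · have hKr : (K : ℝ) ≠ 0 := by exact_mod_cast NeZero.ne K
    have hwr : (w : ℝ) ≠ 0 := by exact_mod_cast NeZero.ne w
    have hGr : (G.card : ℝ) ≠ 0 := by exact_mod_cast hGpos.ne'
    have hw1 : (w : ℝ) + 1 ≠ 0 := by positivity
    rw [hR, hsum, hS, hTX, hIcard, ← hGcard]
    apply le_of_eq
    rw [← Finset.mul_sum, ← Finset.sum_mul]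
    push_cast
    field_simp
end

section
/- Let K, L, w be positive integers with w ≤ ⌊K/L⌋. Let B be the set of (w+1)-tuples of nonnegative integers summing to K−wL−1 and for b ∈ B let b̂ denote the largest component of b. Then w · Σ_{b∈B} min{ 2(K−wL) + w − 1 − b̂ , K } ≤ K·(K−wL)·C(K−wL+w−1, w−1); equivalently, with S = (K/w)·C(K−wL+w−1, w−1), the quantity R_new = Σ_{b∈B} min{2(K−wL)+w−1−b̂, K} / (S·(w+1)) satisfies R_new ≤ (K−wL)/(w+1). -/
open Finset

/-- first part of Corollary 7 of the paper: with `B` the set of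
weak `(w+1)`-compositions of `K−wL−1` and `b̂` the largest component of `b`,
`w · Σ_{b∈B} min{2(K−wL)+w−1−b̂, K} ≤ K·(K−wL)·C(K−wL+w−1, w−1)`,
i.e. `R_new ≤ (K−wL)/(w+1)` (the Hachem–Karamchandani–Diggavi rate). -/
theorem stmt14 (K L w : ℕ) (hK : 1 ≤ K) (hL : 1 ≤ L) (hw : 1 ≤ w) (hwL : w ≤ K / L)
    (B : Finset (Fin (w + 1) → ℕ))
    (hB : ∀ b : Fin (w + 1) → ℕ, b ∈ B ↔ (∑ j, (b j : ℤ)) = (K : ℤ) - (w : ℤ) * (L : ℤ) - 1) :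
    (w : ℝ) * ∑ b ∈ B,
        min (2 * ((K : ℝ) - (w : ℝ) * (L : ℝ)) + (w : ℝ) - 1 - ((Finset.univ.sup b : ℕ) : ℝ))
          (K : ℝ) ≤
      (K : ℝ) * ((K : ℝ) - (w : ℝ) * (L : ℝ)) * (Nat.choose (K - w * L + w - 1) (w - 1) : ℝ) := by
  have hle : w * L ≤ K := (Nat.le_div_iff_mul_le hL).1 hwL
  obtain ⟨n, rfl⟩ := Nat.exists_eq_add_of_le hle
  obtain ⟨v, rfl⟩ := Nat.exists_eq_add_of_le' hw
  -- the key count: `w * |B| = n * C(n + w - 1, w - 1)`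
  have key : (v + 1) * B.card = n * Nat.choose (n + v) v := by
    rcases n with _ | m
    · have hBe : B = ∅ := by
        apply Finset.eq_empty_of_forall_notMem
        intro b hb
        have h1 := (hB b).1 hb
        have h2 : (0 : ℤ) ≤ ∑ j, (b j : ℤ) := Finset.sum_nonneg fun j _ => by positivity
        push_cast at h1
        linarith
      simp [hBe]
    · have hBe : B = Finset.piAntidiag Finset.univ m := by
        ext b
        rw [hB, Finset.mem_piAntidiag]
        simp only [Finset.mem_univ, implies_true, and_true]
        rw [← Nat.cast_inj (R := ℤ)]
        push_cast
        constructor <;> intro h <;> linarith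
      have hcard : B.card = Nat.choose (m + 1 + v) (v + 1) := by
        rw [hBe, ← Finset.map_sym_eq_piAntidiag, Finset.card_map, Finset.sym_univ,
          Finset.card_univ, Sym.card_sym_eq_choose, Fintype.card_fin]
        rw [show v + 1 + 1 + m - 1 = m + (v + 1) by omega, show m + 1 + v = m + (v + 1) by omega]
        exact Nat.choose_symm_add
      have h := Nat.choose_succ_right_eq (m + 1 + v) v
      rw [Nat.add_sub_cancel] at h
      rw [hcard]
      linarith
  have hsum : ∑ b ∈ B, min (2 * ((((v + 1) * L + n : ℕ) : ℝ) - ((v + 1 : ℕ) : ℝ) * (L : ℝ))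
        + ((v + 1 : ℕ) : ℝ) - 1 - ((Finset.univ.sup b : ℕ) : ℝ)) (((v + 1) * L + n : ℕ) : ℝ)
      ≤ B.card * (((v + 1) * L + n : ℕ) : ℝ) := by
    rw [← nsmul_eq_mul B.card]
    apply Finset.sum_le_card_nsmul
    intro b _
    exact min_le_right _ _
  have keyR : ((v + 1 : ℕ) : ℝ) * B.card = n * (Nat.choose (n + v) v : ℝ) := by
    exact_mod_cast key
  have e1 : (v + 1) * L + n - (v + 1) * L + (v + 1) - 1 = n + v := by omega
  have e2 : (((v + 1) * L + n : ℕ) : ℝ) - ((v + 1 : ℕ) : ℝ) * (L : ℝ) = n := by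
    push_cast; ring
  rw [e1, Nat.add_sub_cancel]
  refine (mul_le_mul_of_nonneg_left hsum (by positivity)).trans (le_of_eq ?_)
  rw [e2, ← mul_assoc, keyR]
  ring
end

section
/- Let K, L, w be positive integers with w ≤ ⌊K/L⌋. Let B be the set of (w+1)-tuples of nonnegative integers summing to K−wL−1 and for b ∈ B let b̂ denote the largest component of b. Then w · Σ_{b∈B} min{ 2(K−wL) + w − 1 − b̂ , K } ≤ (w+1)·(K−wL)²·C(K−wL+w−1, w−1); equivalently, with S = (K/w)·C(K−wL+w−1, w−1), the quantity R_new = Σ_{b∈B} min{2(K−wL)+w−1−b̂, K} / (S·(w+1)) satisfies R_new ≤ (K−wL)²/K = K·(1 − wL/K)². -/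
open Finset

lemma card_aux (w m : ℕ) (B : Finset (Fin (w + 1) → ℕ))
    (hB : ∀ b : Fin (w + 1) → ℕ, b ∈ B ↔ ∑ j, b j = m) :
    B.card = (m + w).choose w := by
  have h := Finset.card_finsuppAntidiag_nat_eq_choose (s := (Finset.univ : Finset (Fin (w + 1)))) m
  have e : (Finset.finsuppAntidiag (Finset.univ : Finset (Fin (w + 1))) m).card = B.card := by
    refine Finset.card_bij (fun f _ => (f : Fin (w + 1) → ℕ)) ?_ ?_ ?_
    · intro f hf
      rw [Finset.mem_finsuppAntidiag] at hf
      exact (hB _).2 hf.1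
    · intro f _ g _ hfg
      exact DFunLike.coe_injective hfg
    · intro b hb
      refine ⟨Finsupp.equivFunOnFinite.symm b, ?_, ?_⟩
      · rw [Finset.mem_finsuppAntidiag]
        exact ⟨(hB b).1 hb, by simp⟩
      · rfl
  rw [← e, h]
  simp only [Finset.card_univ, Fintype.card_fin]
  have : w + 1 + m - 1 = m + w := by omega
  rw [this, ← Nat.choose_symm (by omega : w ≤ m + w)]
  congr 1
  omega

/-- second part of Corollary 7 of the paper: with `B` the set of
weak `(w+1)`-compositions of `K−wL−1` and `b̂` the largest component of `b`,
`w · Σ_{b∈B} min{2(K−wL)+w−1−b̂, K} ≤ (w+1)·(K−wL)²·C(K−wL+w−1, w−1)`,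
i.e. `R_new ≤ K(1−wL/K)²` (the Reddy–Karamchandani rate). -/
theorem stmt15 (K L w : ℕ) (hK : 1 ≤ K) (hL : 1 ≤ L) (hw : 1 ≤ w) (hwL : w ≤ K / L)
    (B : Finset (Fin (w + 1) → ℕ))
    (hB : ∀ b : Fin (w + 1) → ℕ, b ∈ B ↔ (∑ j, (b j : ℤ)) = (K : ℤ) - (w : ℤ) * (L : ℤ) - 1) :
    (w : ℝ) * ∑ b ∈ B,
        min (2 * ((K : ℝ) - (w : ℝ) * (L : ℝ)) + (w : ℝ) - 1 - ((Finset.univ.sup b : ℕ) : ℝ))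
          (K : ℝ) ≤
      ((w : ℝ) + 1) * ((K : ℝ) - (w : ℝ) * (L : ℝ)) ^ 2 *
        (Nat.choose (K - w * L + w - 1) (w - 1) : ℝ) := by
  have hle : w * L ≤ K := (Nat.mul_le_mul_right L hwL).trans (Nat.div_mul_le_self K L)
  obtain ⟨n, rfl⟩ := Nat.exists_eq_add_of_le hle
  obtain ⟨v, rfl⟩ := Nat.exists_eq_add_of_le' hw
  have hn : (((v + 1) * L + n : ℕ) : ℝ) - ((v + 1 : ℕ) : ℝ) * (L : ℝ) = n := by push_cast; ring
  rw [hn]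
  rcases n with _ | m
  · have : B = ∅ := by
      refine Finset.eq_empty_of_forall_notMem fun b hb => ?_
      have h1 := (hB b).1 hb
      have h2 : (0 : ℤ) ≤ ∑ j, (b j : ℤ) := Finset.sum_nonneg fun _ _ => by positivity
      push_cast at h1
      linarith
    subst this
    simp
  have hc := card_aux (v + 1) m B (fun b => by
    rw [hB b]
    push_cast
    rw [← Nat.cast_sum]
    constructor
    · intro h
      have : ((∑ j, b j : ℕ) : ℤ) = m := by rw [h]; ring
      exact_mod_cast this
    · intro h
      rw [h]; ring)
  have hch : (v + 1) * B.card = (m + 1) * (m + (v + 1)).choose v := by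
    have h := Nat.choose_succ_right_eq (m + (v + 1)) v
    have e : m + (v + 1) - v = m + 1 := by omega
    rw [e] at h
    rw [hc]; linarith
  have hchR : ((v : ℝ) + 1) * (B.card : ℝ) = ((m : ℝ) + 1) * ((m + (v + 1)).choose v : ℝ) := by
    exact_mod_cast hch
  have e1 : (v + 1) * L + (m + 1) - (v + 1) * L + (v + 1) - 1 = m + (v + 1) := by omega
  have e2 : v + 1 - 1 = v := rfl
  rw [e1, e2]
  refine (mul_le_mul_of_nonneg_left (Finset.sum_le_card_nsmul B _
    (((v : ℝ) + 2) * ((m : ℝ) + 1)) ?_) (by positivity)).trans ?_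
  · intro b _
    refine (min_le_left _ _).trans ?_
    have h0 : (0 : ℝ) ≤ ((Finset.univ.sup b : ℕ) : ℝ) := by positivity
    have h1 : (0 : ℝ) ≤ (v : ℝ) * (m : ℝ) := by positivity
    push_cast
    nlinarith
  · rw [nsmul_eq_mul]
    push_cast
    have : ((v : ℝ) + 1) * ((B.card : ℝ) * (((v : ℝ) + 2) * ((m : ℝ) + 1)))
      = (((v : ℝ) + 1) * (B.card : ℝ)) * (((v : ℝ) + 2) * ((m : ℝ) + 1)) := by ring
    rw [this, hchR]
    apply le_of_eq
    ring
end

section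
/- Let K and L be integers with K > L ≥ K/2 ≥ 1, and set n = K − L − 1. Then Σ_{a=0}^{n} ( 2(K−L) − max(a, n−a) ) equals (K−L)(5K−5L+2)/4 if n is odd, and equals ((K−L)(5K−5L+2)+1)/4 if n is even. Consequently, the quantity R_new(N/K) = Σ_{a=0}^{n} min{ 2(K−L) − max(a, n−a) , K } / (2K) satisfies R_new(N/K) ≤ 5(K−L)(K−L+1)/(8K). (Note that L ≥ K/2 implies 2(K−L) ≤ K, so each minimum equals 2(K−L) − max(a, n−a).) -/
open Finset

lemma aux_step (n : ℕ) : ∑ a ∈ Finset.range (n + 2 + 1), max a (n + 2 - a) =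
    (∑ a ∈ Finset.range (n + 1), max a (n - a)) + (n + 1) + 2 * (n + 2) := by
  rw [Finset.sum_range_succ, Finset.sum_range_succ']
  have : ∑ a ∈ Finset.range (n + 1), max (a + 1) (n + 2 - (a + 1)) =
      ∑ a ∈ Finset.range (n + 1), (max a (n - a) + 1) := by
    apply Finset.sum_congr rfl
    intro a ha
    have := Finset.mem_range.mp ha
    omega
  rw [this, Finset.sum_add_distrib]
  simp
  omega

lemma aux_even (m : ℕ) : ∑ a ∈ Finset.range (2 * m + 1), max a (2 * m - a) =
    3 * m ^ 2 + 2 * m := by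
  induction m with
  | zero => simp
  | succ k ih =>
    rw [show 2 * (k + 1) = 2 * k + 2 by ring, aux_step, ih]
    ring

lemma aux_odd (m : ℕ) : ∑ a ∈ Finset.range (2 * m + 1 + 1), max a (2 * m + 1 - a) =
    (m + 1) * (3 * m + 2) := by
  induction m with
  | zero => decide
  | succ k ih =>
    rw [show 2 * (k + 1) + 1 = 2 * k + 1 + 2 by ring, aux_step, ih]
    ring

/-- Corollary 11 of the paper: for `K > L ≥ K/2 ≥ 1` and
`n = K−L−1`, the sum `Σ_{a=0}^{n} (2(K−L) − max(a, n−a))` equals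
`(K−L)(5K−5L+2)/4` when `n` is odd and `((K−L)(5K−5L+2)+1)/4` when `n` is even;
consequently `R_new(N/K) = Σ_{a=0}^{n} min{2(K−L)−max(a,n−a), K} / (2K)` is at
most `5(K−L)(K−L+1)/(8K)`. -/
theorem stmt16 (K L : ℕ) (hL : 1 ≤ L) (hKL : L < K) (hhalf : K ≤ 2 * L) (hK2 : 2 ≤ K)
    (n : ℕ) (hn : n = K - L - 1) :
    ((Odd n →
        ∑ a ∈ Finset.range (n + 1), (2 * ((K : ℝ) - (L : ℝ)) - ((max a (n - a) : ℕ) : ℝ)) =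
          ((K : ℝ) - (L : ℝ)) * (5 * (K : ℝ) - 5 * (L : ℝ) + 2) / 4) ∧
      (Even n →
        ∑ a ∈ Finset.range (n + 1), (2 * ((K : ℝ) - (L : ℝ)) - ((max a (n - a) : ℕ) : ℝ)) =
          (((K : ℝ) - (L : ℝ)) * (5 * (K : ℝ) - 5 * (L : ℝ) + 2) + 1) / 4)) ∧
    (∑ a ∈ Finset.range (n + 1),
        min (2 * ((K : ℝ) - (L : ℝ)) - ((max a (n - a) : ℕ) : ℝ)) (K : ℝ)) / (2 * (K : ℝ)) ≤
      5 * ((K : ℝ) - (L : ℝ)) * ((K : ℝ) - (L : ℝ) + 1) / (8 * (K : ℝ)) := by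
  have hD : (K : ℝ) - (L : ℝ) = (n : ℝ) + 1 := by
    have : K = L + n + 1 := by omega
    rw [this]; push_cast; ring
  have hodd : Odd n →
        ∑ a ∈ Finset.range (n + 1), (2 * ((K : ℝ) - (L : ℝ)) - ((max a (n - a) : ℕ) : ℝ)) =
          ((K : ℝ) - (L : ℝ)) * (5 * (K : ℝ) - 5 * (L : ℝ) + 2) / 4 := by
    rintro ⟨m, hm⟩
    rw [show 5 * (K : ℝ) - 5 * (L : ℝ) = 5 * ((K : ℝ) - L) by ring, hD,
      Finset.sum_sub_distrib, ← Nat.cast_sum, hm, aux_odd]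
    simp
    ring
  have heven : Even n →
        ∑ a ∈ Finset.range (n + 1), (2 * ((K : ℝ) - (L : ℝ)) - ((max a (n - a) : ℕ) : ℝ)) =
          (((K : ℝ) - (L : ℝ)) * (5 * (K : ℝ) - 5 * (L : ℝ) + 2) + 1) / 4 := by
    intro h
    obtain ⟨m, hm⟩ := h.two_dvd
    rw [show 5 * (K : ℝ) - 5 * (L : ℝ) = 5 * ((K : ℝ) - L) by ring, hD,
      Finset.sum_sub_distrib, ← Nat.cast_sum, hm, aux_even]
    simp
    ring
  refine ⟨⟨hodd, heven⟩, ?_⟩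
  have hKpos : (0 : ℝ) < K := by exact_mod_cast (by omega : 0 < K)
  have h1 : ∑ a ∈ Finset.range (n + 1),
        min (2 * ((K : ℝ) - (L : ℝ)) - ((max a (n - a) : ℕ) : ℝ)) (K : ℝ) ≤
      5 * ((K : ℝ) - (L : ℝ)) * ((K : ℝ) - (L : ℝ) + 1) / 4 := by
    refine (Finset.sum_le_sum fun a _ => min_le_left _ _).trans ?_
    have hn0 : (0 : ℝ) ≤ n := Nat.cast_nonneg n
    rcases Nat.even_or_odd n with h | h
    · rw [heven h, show 5 * (K : ℝ) - 5 * (L : ℝ) = 5 * ((K : ℝ) - L) by ring, hD]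
      nlinarith
    · rw [hodd h, show 5 * (K : ℝ) - 5 * (L : ℝ) = 5 * ((K : ℝ) - L) by ring, hD]
      nlinarith
  calc _ ≤ (5 * ((K : ℝ) - (L : ℝ)) * ((K : ℝ) - (L : ℝ) + 1) / 4) / (2 * (K : ℝ)) := by
        gcongr
    _ = _ := by rw [div_div]; congr 1; ring
end

section
/- Let K, L, w be positive integers with w·L ≤ K. Then the number of w-element subsets s = {a_1,…,a_w} of [K] such that every two distinct elements a_j, a_l of s satisfy |a_j − a_l| ≥ L and K − |a_j − a_l| ≥ L equals (K/w)·C(K−wL+w−1, w−1); equivalently, w times this number of subsets equals K·C(K−wL+w−1, w−1). -/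
open Finset

lemma ins_card (A B : Finset ℕ) (x w : ℕ) (P Q : Finset ℕ → Prop) [DecidablePred P]
    [DecidablePred Q] (hx : x ∉ B)
    (h : ∀ t : Finset ℕ, x ∉ t → ((insert x t ⊆ A ∧ P (insert x t)) ↔ (t ⊆ B ∧ Q t))) :
    ((powersetCard (w + 1) A).filter (fun s => P s ∧ x ∈ s)).card =
      ((powersetCard w B).filter Q).card := by
  refine Finset.card_nbij' (fun s => s.erase x) (fun t => insert x t) ?_ ?_ ?_ ?_
  · intro s hs
    simp only [coe_filter, mem_powersetCard, Set.mem_setOf_eq] at hs ⊢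
    obtain ⟨⟨h1, h2⟩, h3, h4⟩ := hs
    have := (h (s.erase x) (notMem_erase x s)).1 (by rw [insert_erase h4]; exact ⟨h1, h3⟩)
    refine ⟨⟨this.1, ?_⟩, this.2⟩
    rw [card_erase_of_mem h4, h2]; rfl
  · intro t ht
    simp only [coe_filter, mem_powersetCard, Set.mem_setOf_eq] at ht ⊢
    obtain ⟨⟨h1, h2⟩, h3⟩ := ht
    have hxt : x ∉ t := fun hh => hx (h1 hh)
    have := (h t hxt).2 ⟨h1, h3⟩
    refine ⟨⟨this.1, ?_⟩, this.2, mem_insert_self _ _⟩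
    rw [card_insert_of_notMem hxt, h2]
  · intro s hs
    simp only [coe_filter, mem_powersetCard, Set.mem_setOf_eq] at hs
    exact insert_erase hs.2.2
  · intro t ht
    simp only [coe_filter, mem_powersetCard, Set.mem_setOf_eq] at ht
    exact erase_insert (fun hh => hx (ht.1.1 hh))

lemma lin_card (d c : ℕ) (n : ℕ) : ∀ w : ℕ,
    ((powersetCard w (Ico c (c + n))).filter
      (fun s => ∀ a ∈ s, ∀ b ∈ s, a < b → a + (d + 1) ≤ b)).card
      = Nat.choose (n + d - w * d) w := by
  induction n using Nat.strong_induction_on with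
  | _ n ih =>
  intro w
  rcases w with _ | w
  · simp [Finset.filter_singleton]
  rcases n with _ | n
  · have : 0 + d - (w + 1) * d = 0 := by
      have : d ≤ (w + 1) * d := Nat.le_mul_of_pos_left d (by omega)
      omega
    rw [this, powersetCard_eq_empty.2 (by simp)]
    simp
  rw [← Finset.card_filter_add_card_filter_not (fun s => (c + n) ∈ s), filter_filter,
    filter_filter]
  rw [ins_card (Ico c (c + (n + 1))) (Ico c (c + (n - d))) (c + n) w _
    (fun s => ∀ a ∈ s, ∀ b ∈ s, a < b → a + (d + 1) ≤ b) (by simp) ?_]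
  · have e : ((powersetCard (w + 1) (Ico c (c + (n + 1)))).filter
        (fun s => (∀ a ∈ s, ∀ b ∈ s, a < b → a + (d + 1) ≤ b) ∧ c + n ∉ s)) =
        ((powersetCard (w + 1) (Ico c (c + n))).filter
        (fun s => ∀ a ∈ s, ∀ b ∈ s, a < b → a + (d + 1) ≤ b)) := by
      ext s
      simp only [mem_filter, mem_powersetCard, subset_iff, mem_Ico]
      constructor
      · rintro ⟨⟨h1, h2⟩, h3, h4⟩
        refine ⟨⟨fun y hy => ?_, h2⟩, h3⟩
        have := h1 hy
        have : y ≠ c + n := fun hh => h4 (hh ▸ hy)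
        omega
      · rintro ⟨⟨h1, h2⟩, h3⟩
        refine ⟨⟨fun y hy => ?_, h2⟩, h3, fun hh => ?_⟩
        · have := h1 hy
          omega
        · have := h1 hh
          omega
    rw [e, ih n (by omega), ih (n - d) (by omega)]
    have hs : (w + 1) * d = w * d + d := by ring
    rw [hs]
    rcases Nat.eq_zero_or_pos w with rfl | hw
    · simp; omega
    have hwd : d ≤ w * d := Nat.le_mul_of_pos_left d hw
    rcases le_or_gt (w * d) n with h | h
    · rw [show n + 1 + d - (w * d + d) = (n - w * d) + 1 by omega, Nat.choose_succ_succ,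
        show n - d + d - w * d = n - w * d by omega,
        show n + d - (w * d + d) = n - w * d by omega]
    · rw [show n + 1 + d - (w * d + d) = 0 by omega,
        show n - d + d - w * d = 0 by omega,
        show n + d - (w * d + d) = 0 by omega, Nat.choose_eq_zero_of_lt hw]
      simp
  · intro t ht
    simp only [subset_iff, mem_insert, mem_Ico]
    constructor
    · rintro ⟨h1, h2⟩
      refine ⟨fun y hy => ?_, fun a ha b hb => h2 a (Or.inr ha) b (Or.inr hb)⟩
      have h3 := h1 (Or.inr hy)
      have : y ≠ c + n := fun hh => ht (hh ▸ hy)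
      have := h2 y (Or.inr hy) (c + n) (Or.inl rfl) (by omega)
      omega
    · rintro ⟨h1, h2⟩
      refine ⟨?_, ?_⟩
      · rintro y (rfl | hy)
        · omega
        · have := h1 hy
          omega
      · rintro a (rfl | ha) b (rfl | hb) hab
        · omega
        · have := h1 hb
          omega
        · have := h1 ha
          omega
        · exact h2 a ha b hb hab

/-- the number of `w`-element subsets of `[K]` whose pairwise
circular distances on the cycle of length `K` are all at least `L` (the number
`|Ŝ|` of subfile index sets in the uncoded placement policy) satisfies
`w · |Ŝ| = K·C(K−wL+w−1, w−1)`, i.e. `|Ŝ| = (K/w)·C(K−wL+w−1, w−1)`. -/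
theorem stmt17 (K L w : ℕ) (hK : 1 ≤ K) (hL : 1 ≤ L) (hw : 1 ≤ w) (hwL : w * L ≤ K) :
    w * (((Finset.Icc 1 K).powersetCard w).filter (fun s =>
        ∀ a : ℕ, a ∈ s → ∀ b : ℕ, b ∈ s → a ≠ b →
          (L : ℤ) ≤ |(a : ℤ) - (b : ℤ)| ∧ (L : ℤ) ≤ (K : ℤ) - |(a : ℤ) - (b : ℤ)|)).card =
      K * Nat.choose (K - w * L + w - 1) (w - 1) := by
  obtain ⟨d, rfl⟩ : ∃ d, L = d + 1 := ⟨L - 1, by omega⟩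
  obtain ⟨v, rfl⟩ : ∃ v, w = v + 1 := ⟨w - 1, by omega⟩
  have hexp : (v + 1) * (d + 1) = v * d + v + d + 1 := by ring
  have hfc : ((Finset.Icc 1 K).powersetCard (v + 1)).filter (fun s =>
        ∀ a : ℕ, a ∈ s → ∀ b : ℕ, b ∈ s → a ≠ b →
          ((d + 1 : ℕ) : ℤ) ≤ |(a : ℤ) - (b : ℤ)| ∧
          ((d + 1 : ℕ) : ℤ) ≤ (K : ℤ) - |(a : ℤ) - (b : ℤ)|) =
      ((Finset.Icc 1 K).powersetCard (v + 1)).filter (fun s =>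
        ∀ a ∈ s, ∀ b ∈ s, a < b → a + (d + 1) ≤ b ∧ b + (d + 1) ≤ K + a) := by
    refine filter_congr fun s _ => ?_
    constructor
    · intro h a ha b hb hab
      have := h a ha b hb hab.ne
      rw [abs_of_nonpos (by omega)] at this
      omega
    · intro h a ha b hb hab
      rcases lt_or_gt_of_ne hab with hl | hl
      · have := h a ha b hb hl
        rw [abs_of_nonpos (by omega)]
        omega
      · have := h b hb a ha hl
        rw [abs_of_nonneg (by omega)]
        omega
  rw [hfc]
  have hsplit : ((Finset.Icc 1 K).powersetCard (v + 1)).filter (fun s =>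
        ∀ a ∈ s, ∀ b ∈ s, a < b → a + (d + 1) ≤ b ∧ b + (d + 1) ≤ K + a) =
      ((Ico (d + 1) (d + 1 + (K - d))).powersetCard (v + 1)).filter (fun s =>
        ∀ a ∈ s, ∀ b ∈ s, a < b → a + (d + 1) ≤ b) ∪
      (Icc 1 d).biUnion (fun x => ((Finset.Icc 1 K).powersetCard (v + 1)).filter (fun s =>
        (∀ a ∈ s, ∀ b ∈ s, a < b → a + (d + 1) ≤ b ∧ b + (d + 1) ≤ K + a) ∧ x ∈ s)) := by
    ext s
    simp only [mem_filter, mem_powersetCard, subset_iff, mem_Ico, mem_Icc, mem_union, mem_biUnion]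
    constructor
    · rintro ⟨⟨h1, h2⟩, h3⟩
      by_cases hx : ∃ x ∈ s, x ≤ d
      · obtain ⟨x, hx, hxd⟩ := hx
        exact Or.inr ⟨x, ⟨(h1 hx).1, hxd⟩, ⟨h1, h2⟩, h3, hx⟩
      · push Not at hx
        refine Or.inl ⟨⟨fun y hy => ?_, h2⟩, fun a ha b hb hab => (h3 a ha b hb hab).1⟩
        have := h1 hy
        have := hx y hy
        omega
    · rintro (⟨⟨h1, h2⟩, h3⟩ | ⟨x, hx, ⟨h1, h2⟩, h3, h4⟩)
      · refine ⟨⟨fun y hy => ?_, h2⟩, fun a ha b hb hab => ⟨h3 a ha b hb hab, ?_⟩⟩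
        · have := h1 hy
          omega
        · have := h1 ha
          have := h1 hb
          omega
      · exact ⟨⟨h1, h2⟩, h3⟩
  rw [hsplit, card_union_of_disjoint, card_biUnion, lin_card]
  · have hx : ∀ x ∈ Icc 1 d, (((Finset.Icc 1 K).powersetCard (v + 1)).filter (fun s =>
        (∀ a ∈ s, ∀ b ∈ s, a < b → a + (d + 1) ≤ b ∧ b + (d + 1) ≤ K + a) ∧ x ∈ s)).card =
        Nat.choose (K - (v + 1) * (d + 1) + (v + 1) - 1) v := by
      intro x hx
      rw [mem_Icc] at hx
      rw [ins_card (Icc 1 K) (Ico (x + (d + 1)) (x + (d + 1) + (K - (2 * d + 1)))) x v _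
        (fun s => ∀ a ∈ s, ∀ b ∈ s, a < b → a + (d + 1) ≤ b) (by simp) ?_, lin_card]
      · rcases Nat.eq_zero_or_pos v with rfl | hv
        · simp
        have : d ≤ v * d := Nat.le_mul_of_pos_left d hv
        congr 1
        omega
      · intro t ht
        simp only [subset_iff, mem_insert, mem_Ico, mem_Icc]
        constructor
        · rintro ⟨h1, h2⟩
          refine ⟨fun y hy => ?_, fun a ha b hb hab => (h2 a (Or.inr ha) b (Or.inr hb) hab).1⟩
          have h3 := h1 (Or.inr hy)
          have : y ≠ x := fun hh => ht (hh ▸ hy)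
          rcases lt_or_gt_of_ne this with hl | hl
          · have := h2 y (Or.inr hy) x (Or.inl rfl) hl
            omega
          · have := h2 x (Or.inl rfl) y (Or.inr hy) hl
            omega
        · rintro ⟨h1, h2⟩
          refine ⟨?_, ?_⟩
          · rintro y (rfl | hy)
            · omega
            · have := h1 hy
              omega
          · rintro a (rfl | ha) b (rfl | hb) hab
            · omega
            · have := h1 hb
              omega
            · have := h1 ha
              omega
            · have := h2 a ha b hb hab
              have := h1 ha
              have := h1 hb
              omega
    rw [sum_congr rfl hx, sum_const, Nat.card_Icc]
    obtain ⟨m, rfl⟩ := Nat.exists_eq_add_of_le hwL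
    have e2 : (v + 1) * d = v * d + d := by ring
    rw [show (v + 1) * (d + 1) + m - d + d - (v + 1) * d = (m + v) + 1 by omega,
      show (v + 1) * (d + 1) + m - (v + 1) * (d + 1) + (v + 1) - 1 = m + v by omega]
    have := Nat.add_one_mul_choose_eq (m + v) v
    simp only [Nat.add_sub_cancel, smul_eq_mul]
    linear_combination -this
  · intro x hx y hy hxy
    rw [Function.onFun, disjoint_left]
    intro s hs hs'
    simp only [mem_filter, coe_Icc, Set.mem_Icc] at hs hs' hx hy
    rcases lt_or_gt_of_ne hxy with hl | hl
    · have := hs.2.1 x hs.2.2 y hs'.2.2 hl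
      omega
    · have := hs.2.1 y hs'.2.2 x hs.2.2 hl
      omega
  · rw [disjoint_left]
    intro s hs hs'
    simp only [mem_filter, mem_powersetCard, subset_iff, mem_Ico, mem_biUnion, mem_Icc] at hs hs'
    obtain ⟨x, hx, _, _, h4⟩ := hs'
    have := hs.1.1 h4
    omega
end

section
/- Consider a single unicast index coding problem with n users: message index set [n], user k demands W_k = {k} and knows K_k ⊆ [n] \ {k}. Say user j interferes with user k if j ≠ k and j ∉ K_k; a coloring c : [n] → ℕ is proper if no user shares its color with any user that interferes with it (equivalently, c(j) = c(k) with j ≠ k implies j ∈ K_k and k ∈ K_j); and for a proper coloring c let D(c) = max_{k∈[n]} |c(N⁺(k))|, where N⁺(k) = {k} ∪ { j : j interferes with k } is the closed anti-outneighborhood of user k and c(N⁺(k)) is the set of colors assigned to N⁺(k). Then for every proper coloring c, the optimal broadcast rate R* of the ICP satisfies R* ≤ D(c); in particular R* ≤ χ_l, the local chromatic number min_c D(c) over all proper colorings c. -/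
open Finset

/-- Users (= message indices) of a single unicast ICP with `n` users: `[n]`. -/
abbrev Usr (n : ℕ) : Type := {k : ℕ // k ∈ Finset.Icc 1 n}

/-- A valid index code of length `ℓ` for message length `t`. -/
def ValidCode {I U : Type} (W Kn : U → Set I) (t ℓ : ℕ) : Prop :=
  ∃ E : (I → Fin t → Bool) → Fin ℓ → Bool,
  ∃ D : ∀ u : U, (Fin ℓ → Bool) → (↥(Kn u) → Fin t → Bool) → (↥(W u) → Fin t → Bool),
    ∀ x : I → Fin t → Bool, ∀ u : U,
      D u (E x) (fun m => x m.1) = fun m => x m.1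

/-- The optimal broadcast rate of an index coding problem. -/
noncomputable def optRate {I U : Type} (W Kn : U → Set I) : ℝ :=
  sInf {ρ : ℝ | ∃ t ℓ : ℕ, 1 ≤ t ∧ ValidCode W Kn t ℓ ∧ ρ = (ℓ : ℝ) / (t : ℝ)}

/-- Want sets of a single unicast ICP with `n` users: user `k` demands message `k`. -/
def suicpW (n : ℕ) : Usr n → Set (Usr n) := fun u => {x | x.1 = u.1}

/-- Known sets of a single unicast ICP with `n` users, induced by `Kn : ℕ → Set ℕ`. -/
def suicpK (n : ℕ) (Kn : ℕ → Set ℕ) : Usr n → Set (Usr n) := fun u => {x | x.1 ∈ Kn u.1}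

/-- A code whose output together with the side information determines the demand is valid. -/
lemma validCode_of_inj {I U : Type} (W Kn : U → Set I) (t ℓ : ℕ)
    (E : (I → Fin t → Bool) → Fin ℓ → Bool)
    (h : ∀ (x y : I → Fin t → Bool) (u : U), E x = E y → (∀ m ∈ Kn u, x m = y m) →
      ∀ m ∈ W u, x m = y m) : ValidCode W Kn t ℓ := by
  classical
  refine ⟨E, fun u e s m =>
    if hx : ∃ x : I → Fin t → Bool, E x = e ∧ (fun m : ↥(Kn u) => x m.1) = s
    then hx.choose m.1 else fun _ => false, ?_⟩
  intro x u
  funext m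
  have hx : ∃ y : I → Fin t → Bool, E y = E x ∧
      (fun m : ↥(Kn u) => y m.1) = (fun m : ↥(Kn u) => x m.1) := ⟨x, rfl, rfl⟩
  beta_reduce
  rw [dif_pos hx]
  exact h _ _ u hx.choose_spec.1
    (fun m hm => congrFun hx.choose_spec.2 ⟨m, hm⟩) m.1 m.2

/-- The linear algebra core: annihilate interfering colors by a polynomial. -/
lemma core {F ι : Type} [Field F] [Fintype ι] (D : ℕ) (S : Finset F) (hS : S.card ≤ D)
    (a z : ι → F) (k : ι) (hk : a k ∈ S)
    (hz : ∀ j, j ≠ k → z j = 0 ∨ (a j ∈ S ∧ a j ≠ a k))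
    (hy : ∀ r : Fin D, ∑ j, a j ^ (r : ℕ) * z j = 0) : z k = 0 := by
  classical
  set p : Polynomial F := ∏ s ∈ S.erase (a k), (Polynomial.X - Polynomial.C s) with hp
  have hdeg : p.natDegree < D := by
    rw [hp, Polynomial.natDegree_prod_of_monic _ _ (fun s _ => Polynomial.monic_X_sub_C s)]
    simp only [Polynomial.natDegree_X_sub_C, Finset.sum_const, smul_eq_mul, mul_one]
    exact lt_of_lt_of_le (Finset.card_erase_lt_of_mem hk) hS
  have h1 : ∑ j, p.eval (a j) * z j = 0 := by
    simp_rw [Polynomial.eval_eq_sum_range' hdeg, Finset.sum_mul]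
    rw [Finset.sum_comm]
    refine Finset.sum_eq_zero fun r hr => ?_
    have := hy ⟨r, Finset.mem_range.1 hr⟩
    simp_rw [mul_assoc]
    rw [← Finset.mul_sum, this, mul_zero]
  rw [Finset.sum_eq_single k] at h1
  · rcases mul_eq_zero.1 h1 with h | h
    · exfalso
      rw [hp, Polynomial.eval_prod, Finset.prod_eq_zero_iff] at h
      obtain ⟨s, hs, h⟩ := h
      simp only [Polynomial.eval_sub, Polynomial.eval_X, Polynomial.eval_C, sub_eq_zero] at h
      exact (Finset.mem_erase.1 hs).1 h.symm
    · exact h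
  · intro j _ hj
    rcases hz j hj with h | ⟨h, h'⟩
    · rw [h, mul_zero]
    · rw [hp, Polynomial.eval_prod, Finset.prod_eq_zero (Finset.mem_erase.2 ⟨h', h⟩) (by simp),
        zero_mul]
  · simp

/-- Lemma 6 of the paper, local chromatic number upper bound:
for a single unicast ICP with `n` users, any proper coloring `c`, and any `D`
bounding the number of distinct colors on every closed anti-outneighborhood
`N⁺(k) = {k} ∪ {j : j interferes with k}`, the optimal broadcast rate satisfies
`R* ≤ D`; in particular `R* ≤ χ_l`, the local chromatic number. -/
theorem stmt18 (n : ℕ) (Kn : ℕ → Set ℕ)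
    (hKn : ∀ k ∈ Finset.Icc 1 n, Kn k ⊆ {j | j ∈ Finset.Icc 1 n ∧ j ≠ k})
    (c : ℕ → ℕ)
    (hproper : ∀ j ∈ Finset.Icc 1 n, ∀ k ∈ Finset.Icc 1 n,
      j ≠ k → c j = c k → j ∈ Kn k ∧ k ∈ Kn j)
    (D : ℕ)
    (hD : ∀ k ∈ Finset.Icc 1 n,
      (c '' {j | j ∈ Finset.Icc 1 n ∧ (j = k ∨ (j ≠ k ∧ j ∉ Kn k))}).ncard ≤ D) :
    optRate (suicpW n) (suicpK n Kn) ≤ (D : ℝ) := by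
  classical
  obtain ⟨t, ht, hct⟩ : ∃ t : ℕ, 1 ≤ t ∧ ∀ j ∈ Finset.Icc 1 n, c j < 2 ^ t := by
    refine ⟨(Finset.Icc 1 n).sup c + 1, by omega, fun j hj => ?_⟩
    have h1 := Finset.le_sup (f := c) hj
    have h2 := Nat.lt_two_pow_self (n := (Finset.Icc 1 n).sup c + 1)
    omega
  let F := GaloisField 2 t
  have hF : Nat.card F = 2 ^ t := GaloisField.card 2 t (by omega)
  have : Finite F := Nat.finite_of_card_ne_zero (by rw [hF]; positivity)
  obtain ⟨e⟩ : Nonempty (F ≃ Fin (2 ^ t)) := ⟨Finite.equivFinOfCardEq hF⟩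
  obtain ⟨φ⟩ : Nonempty ((Fin t → Bool) ≃ F) := by
    refine (Finite.card_eq).1 ?_
    rw [hF]; simp
  obtain ⟨ψ⟩ : Nonempty ((Fin D → F) ≃ (Fin (D * t) → Bool)) := by
    refine (Finite.card_eq).1 ?_
    rw [Nat.card_fun, hF]; simp [← pow_mul, mul_comm]
  let α : ℕ → F := fun s => e.symm ⟨s % 2 ^ t, Nat.mod_lt _ (by positivity)⟩
  have hα : ∀ i j, i < 2 ^ t → j < 2 ^ t → α i = α j → i = j := by
    intro i j hi hj h
    have h2 := e.symm.injective h
    simpa [Nat.mod_eq_of_lt hi, Nat.mod_eq_of_lt hj] using h2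
  have hvalid : ValidCode (suicpW n) (suicpK n Kn) t (D * t) := by
    refine validCode_of_inj _ _ _ _
      (fun x => ψ fun r => ∑ j : Usr n, α (c j.1) ^ (r : ℕ) * φ (x j)) ?_
    intro x y u hE hK m hm
    have hmu : m = u := Subtype.ext hm
    subst hmu
    have hE' := ψ.injective hE
    set N : Set ℕ := {j | j ∈ Finset.Icc 1 n ∧ (j = m.1 ∨ (j ≠ m.1 ∧ j ∉ Kn m.1))} with hN
    have hNfin : N.Finite := (Finset.finite_toSet (Finset.Icc 1 n)).subset fun j hj => hj.1
    have hcfin : (c '' N).Finite := hNfin.image c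
    have key := core D (hcfin.toFinset.image α)
      (Finset.card_image_le.trans (by
        rw [← Set.ncard_eq_toFinset_card _ hcfin]; exact hD m.1 m.2))
      (fun j : Usr n => α (c j.1)) (fun j => φ (x j) - φ (y j)) m
      (Finset.mem_image_of_mem α (hcfin.mem_toFinset.2
        (Set.mem_image_of_mem c ⟨m.2, Or.inl rfl⟩)))
      (by
        intro j hj
        have hj' : j.1 ≠ m.1 := fun h => hj (Subtype.ext h)
        by_cases hjK : j.1 ∈ Kn m.1
        · left
          rw [hK j hjK, sub_self]
        · right
          refine ⟨Finset.mem_image_of_mem α (hcfin.mem_toFinset.2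
            (Set.mem_image_of_mem c ⟨j.2, Or.inr ⟨hj', hjK⟩⟩)), fun h => ?_⟩
          exact hjK (hproper j.1 j.2 m.1 m.2 hj'
            (hα _ _ (hct _ j.2) (hct _ m.2) h)).1)
      (by
        intro r
        have := congrFun hE' r
        simp only [mul_sub, Finset.sum_sub_distrib]
        exact sub_eq_zero.2 this)
    exact φ.injective (sub_eq_zero.1 key)
  unfold optRate
  refine csInf_le ⟨0, ?_⟩ ⟨t, D * t, ht, hvalid, ?_⟩
  · rintro ρ ⟨t, ℓ, _, _, rfl⟩
    positivity
  · have : (t : ℝ) ≠ 0 := by exact_mod_cast (by omega : t ≠ 0)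
    push_cast
    field_simp
end
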